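/- The second derivative of the piecewise density P is continuous at l = √2·a: the derivative function P′ is differentiable at l = √2·a; equivalently, the limit as l → (√2·a)⁻ of the second derivative of P₂ equals the limit as l → (√2·a)⁺ of the second derivative of P₃. -/

import Mathlib

open MeasureTheory Real Set Filter Topology

/-- The density of separations on the range `a ≤ l ≤ √2·a`. -/
noncomputable def P₂ (a l : ℝ) : ℝ :=
  l / a ^ 6 *
    (2 * l ^ 4 + 6 * a ^ 2 * l ^ 2 - a ^ 4 - 2 * π * a ^ 3 * (4 * l - 3 * a)
      - 8 * a * (2 * l ^ 2 + a ^ 2) * Real.sqrt (l ^ 2 - a ^ 2)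
      + 24 * a ^ 2 * l ^ 2 * Real.arccos (a / l))

/-- The density of separations on the range `√2·a ≤ l ≤ √3·a`. -/
noncomputable def P₃ (a l : ℝ) : ℝ :=
  l / a ^ 6 *
    (8 * a * (l ^ 2 + a ^ 2) * Real.sqrt (l ^ 2 - 2 * a ^ 2)
      - (l ^ 2 + a ^ 2) * (l ^ 2 + 5 * a ^ 2)
      + 2 * π * a ^ 2 * (3 * l ^ 2 - 4 * a * l + 3 * a ^ 2)
      + 24 * a ^ 3 * l * Real.arccos (a ^ 2 / (l ^ 2 - a ^ 2))
      - 24 * a ^ 2 * (l ^ 2 + a ^ 2) * Real.arccos (a / Real.sqrt (l ^ 2 - a ^ 2)))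

/-- The piecewise density: `P₂` on `[a, √2·a]` and `P₃` on `[√2·a, √3·a]`. -/
noncomputable def P (a l : ℝ) : ℝ :=
  if l ≤ Real.sqrt 2 * a then P₂ a l else P₃ a l

/-!
Differentiating `P₂` and `P₃`, the terms with `√(l ^ 2 - a ^ 2)`, respectively
`√(l ^ 2 - 2 * a ^ 2)`, in the denominator combine into multiples of that square root itself. Hence
the formulas for `P₃'` and `P₃''`, obtained for `l > √2 * a`, extend continuously to `√2 * a`, where
the individual arccosines in `P₃` are not differentiable. There the two arccosines of `P₃` vanish
and the one of `P₂` is `π / 4`, so that modulo `l ^ 2 = 2 * a ^ 2` the values and the first two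
derivatives of `P₂` and `P₃` agree. The mean value theorem turns this into differentiability of the
glued function and of its derivative at the junction.
-/

section Gluing

variable {E : Type*} [NormedAddCommGroup E] [NormedSpace ℝ E] {c : ℝ}

lemma hasDerivAt_of_eventually_ne {f f' : ℝ → E}
    (hderiv : ∀ᶠ x in 𝓝[≠] c, HasDerivAt f (f' x) x) (hf : ContinuousAt f c)
    (hf' : ContinuousAt f' c) : HasDerivAt f (f' c) c := by
  rw [← nhdsLT_sup_nhdsGT, eventually_sup] at hderiv
  obtain ⟨hleft, hright⟩ := hderiv
  have hdiff : DifferentiableOn ℝ f {x | HasDerivAt f (f' x) x} := fun x hx =>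
    (show HasDerivAt f (f' x) x from hx).differentiableAt.differentiableWithinAt
  have hIic : HasDerivWithinAt f (f' c) (Iic c) c :=
    hasDerivWithinAt_Iic_of_tendsto_deriv hdiff hf.continuousWithinAt hleft <|
      (hf'.mono_left nhdsWithin_le_nhds).congr' (hleft.mono fun _ hx => hx.deriv.symm)
  have hIci : HasDerivWithinAt f (f' c) (Ici c) c :=
    hasDerivWithinAt_Ici_of_tendsto_deriv hdiff hf.continuousWithinAt hright <|
      (hf'.mono_left nhdsWithin_le_nhds).congr' (hright.mono fun _ hx => hx.deriv.symm)
  simpa only [Iic_union_Ici, hasDerivWithinAt_univ] using hIic.union hIci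

lemma differentiableAt_deriv_of_eventually_ne {f f' f'' : ℝ → E}
    (hderiv : ∀ᶠ x in 𝓝[≠] c, HasDerivAt f (f' x) x)
    (hderiv' : ∀ᶠ x in 𝓝[≠] c, HasDerivAt f' (f'' x) x)
    (hf : ContinuousAt f c) (hf' : ContinuousAt f' c) (hf'' : ContinuousAt f'' c) :
    DifferentiableAt ℝ (deriv f) c := by
  have hnear : ∀ᶠ x in 𝓝 c, HasDerivAt f (f' x) x :=
    nhdsNE_sup_pure c ▸ eventually_sup.2
      ⟨hderiv, eventually_pure.2 (hasDerivAt_of_eventually_ne hderiv hf hf')⟩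
  exact ((hasDerivAt_of_eventually_ne hderiv' hf' hf'').congr_of_eventuallyEq
    (hnear.mono fun _ hx => hx.deriv)).differentiableAt

lemma continuousAt_ite_le {X Y : Type*} [TopologicalSpace X] [Preorder X] [DecidableLE X]
    [TopologicalSpace Y] {f g : X → Y} {c : X} (hf : ContinuousAt f c) (hg : ContinuousAt g c)
    (h : f c = g c) : ContinuousAt (fun x => if x ≤ c then f x else g x) c := by
  rw [ContinuousAt, if_pos le_rfl]
  exact (hf.mono_left inf_le_left).if (h ▸ hg.mono_left inf_le_left)

lemma eventually_ne_hasDerivAt_ite_le {f f' g g' : ℝ → E}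
    (hf : ∀ᶠ x in 𝓝[<] c, HasDerivAt f (f' x) x) (hg : ∀ᶠ x in 𝓝[>] c, HasDerivAt g (g' x) x) :
    ∀ᶠ x in 𝓝[≠] c,
      HasDerivAt (fun y => if y ≤ c then f y else g y) (if x ≤ c then f' x else g' x) x := by
  rw [← nhdsLT_sup_nhdsGT, eventually_sup]
  constructor
  · filter_upwards [hf, self_mem_nhdsWithin] with x hx (hxc : x < c)
    rw [if_pos hxc.le]
    refine hx.congr_of_eventuallyEq ?_
    filter_upwards [Iio_mem_nhds hxc] with y (hy : y < c) using if_pos hy.le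
  · filter_upwards [hg, self_mem_nhdsWithin] with x hx (hxc : c < x)
    rw [if_neg hxc.not_ge]
    refine hx.congr_of_eventuallyEq ?_
    filter_upwards [Ioi_mem_nhds hxc] with y (hy : c < y) using if_neg hy.not_ge

lemma tendsto_deriv_deriv_nhdsWithin {f f' f'' : ℝ → E} {s : Set ℝ} {e : E} (hs : IsOpen s)
    (hf : ∀ᶠ x in 𝓝[s] c, HasDerivAt f (f' x) x)
    (hf' : ∀ᶠ x in 𝓝[s] c, HasDerivAt f' (f'' x) x) (hlim : Tendsto f'' (𝓝[s] c) (𝓝 e)) :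
    Tendsto (deriv (deriv f)) (𝓝[s] c) (𝓝 e) := by
  refine hlim.congr' ?_
  filter_upwards [eventually_eventually_nhdsWithin.2 hf, hf', self_mem_nhdsWithin]
    with x hx hx' hxs
  rw [hs.nhdsWithin_eq hxs] at hx
  exact (hx'.congr_of_eventuallyEq (hx.mono fun _ hy => hy.deriv)).deriv.symm

end Gluing

section ElementaryDerivatives

variable {a l : ℝ}

lemma hasDerivAt_sqrt_sq_sub {k : ℝ} (h : k < l ^ 2) :
    HasDerivAt (fun x => √(x ^ 2 - k)) (l / √(l ^ 2 - k)) l := by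
  have hsq : HasDerivAt (fun x : ℝ => x ^ 2 - k) (2 * l) l := by
    simpa using (hasDerivAt_pow 2 l).sub_const k
  refine (hsq.sqrt (sub_pos.2 h).ne').congr_deriv ?_
  exact mul_div_mul_left _ _ two_ne_zero

lemma hasDerivAt_arccos_const_div {f : ℝ → ℝ} {f' : ℝ} (hf : HasDerivAt f f' l)
    (hpos : 0 < f l) (h : a ^ 2 < f l ^ 2) :
    HasDerivAt (fun x => arccos (a / f x)) (a * f' / (f l * √(f l ^ 2 - a ^ 2))) l := by
  have hlt : |a / f l| < 1 := by
    rw [abs_div, div_lt_one (abs_pos.2 hpos.ne')]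
    exact sq_lt_sq.1 h
  have hquot : HasDerivAt (fun x => a / f x) (-(a * f') / f l ^ 2) l := by
    simpa using (hasDerivAt_const l a).fun_div hf hpos.ne'
  have hsqrt : √(1 - (a / f l) ^ 2) = √(f l ^ 2 - a ^ 2) / f l := by
    rw [div_pow, one_sub_div (pow_ne_zero 2 hpos.ne'), sqrt_div (sub_pos.2 h).le,
      sqrt_sq hpos.le]
  have harccos := hasDerivAt_arccos (abs_lt.1 hlt).1.ne' (abs_lt.1 hlt).2.ne
  refine (harccos.comp l hquot).congr_deriv ?_
  have := sqrt_pos.2 (sub_pos.2 h)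
  rw [hsqrt]
  field_simp

lemma hasDerivAt_arccos_div_sq_sub_sq (hl : 0 < l) (h : 2 * a ^ 2 < l ^ 2) :
    HasDerivAt (fun x => arccos (a ^ 2 / (x ^ 2 - a ^ 2)))
      (2 * a ^ 2 / ((l ^ 2 - a ^ 2) * √(l ^ 2 - 2 * a ^ 2))) l := by
  have hden : 0 < l ^ 2 - a ^ 2 := by nlinarith
  have hsq : HasDerivAt (fun x : ℝ => x ^ 2 - a ^ 2) (2 * l) l := by
    simpa using (hasDerivAt_pow 2 l).sub_const (a ^ 2)
  have hsqrt : √((l ^ 2 - a ^ 2) ^ 2 - (a ^ 2) ^ 2) = l * √(l ^ 2 - 2 * a ^ 2) := by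
    rw [show (l ^ 2 - a ^ 2) ^ 2 - (a ^ 2) ^ 2 = l ^ 2 * (l ^ 2 - 2 * a ^ 2) by ring,
      sqrt_mul (sq_nonneg l), sqrt_sq hl.le]
  have hlt : (a ^ 2) ^ 2 < (l ^ 2 - a ^ 2) ^ 2 :=
    pow_lt_pow_left₀ (by linarith) (sq_nonneg a) two_ne_zero
  refine (hasDerivAt_arccos_const_div hsq hden hlt).congr_deriv ?_
  rw [hsqrt]
  field_simp

lemma hasDerivAt_arccos_div_sqrt_sq_sub_sq (h : 2 * a ^ 2 < l ^ 2) :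
    HasDerivAt (fun x => arccos (a / √(x ^ 2 - a ^ 2)))
      (a * l / ((l ^ 2 - a ^ 2) * √(l ^ 2 - 2 * a ^ 2))) l := by
  have hden : 0 < l ^ 2 - a ^ 2 := by nlinarith
  have hsq : √(l ^ 2 - a ^ 2) ^ 2 = l ^ 2 - a ^ 2 := sq_sqrt hden.le
  refine (hasDerivAt_arccos_const_div (hasDerivAt_sqrt_sq_sub (sub_pos.1 hden))
    (sqrt_pos.2 hden) (by linarith)).congr_deriv ?_
  rw [hsq, show l ^ 2 - a ^ 2 - a ^ 2 = l ^ 2 - 2 * a ^ 2 by ring, ← mul_div_assoc, div_div,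
    ← mul_assoc, ← sq, hsq]

end ElementaryDerivatives

/-- Closed form of the first derivative of `P₂ a`, valid for `l > a > 0`. -/
noncomputable def P₂' (a l : ℝ) : ℝ :=
  (10 * l ^ 4 + 18 * a ^ 2 * l ^ 2 - a ^ 4 - 2 * π * a ^ 3 * (8 * l - 3 * a)
    - 8 * a * (8 * l ^ 2 + a ^ 2) * √(l ^ 2 - a ^ 2)
    + 72 * a ^ 2 * l ^ 2 * arccos (a / l)) / a ^ 6

/-- Closed form of the second derivative of `P₂ a`, valid for `l > a > 0`. -/
noncomputable def P₂'' (a l : ℝ) : ℝ :=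
  (40 * l ^ 3 + 36 * a ^ 2 * l - 16 * π * a ^ 3 - 192 * a * l * √(l ^ 2 - a ^ 2)
    + 144 * a ^ 2 * l * arccos (a / l)) / a ^ 6

/-- Closed form of the first derivative of `P₃ a`, valid for `l > √2 * a > 0`. -/
noncomputable def P₃' (a l : ℝ) : ℝ :=
  (8 * a * (4 * l ^ 2 + a ^ 2) * √(l ^ 2 - 2 * a ^ 2)
    - (5 * l ^ 4 + 18 * a ^ 2 * l ^ 2 + 5 * a ^ 4)
    + 2 * π * a ^ 2 * (9 * l ^ 2 - 8 * a * l + 3 * a ^ 2)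
    + 48 * a ^ 3 * l * arccos (a ^ 2 / (l ^ 2 - a ^ 2))
    - 24 * a ^ 2 * (3 * l ^ 2 + a ^ 2) * arccos (a / √(l ^ 2 - a ^ 2))) / a ^ 6

/-- Closed form of the second derivative of `P₃ a`, valid for `l > √2 * a > 0`. -/
noncomputable def P₃'' (a l : ℝ) : ℝ :=
  (96 * a * l * √(l ^ 2 - 2 * a ^ 2) - 20 * l ^ 3 - 36 * a ^ 2 * l
    + 4 * π * a ^ 2 * (9 * l - 4 * a)
    + 48 * a ^ 3 * arccos (a ^ 2 / (l ^ 2 - a ^ 2))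
    - 144 * a ^ 2 * l * arccos (a / √(l ^ 2 - a ^ 2))) / a ^ 6

section Densities

variable {a l : ℝ}

lemma hasDerivAt_P₂ (hl : 0 < l) (h : a ^ 2 < l ^ 2) : HasDerivAt (P₂ a) (P₂' a l) l := by
  have hid := hasDerivAt_id' l
  have hsq := hasDerivAt_pow 2 l
  have hpoly := ((((hasDerivAt_pow 4 l).const_mul 2).fun_add
    (hsq.const_mul (6 * a ^ 2))).sub_const (a ^ 4)).fun_sub
    (((hid.const_mul 4).sub_const (3 * a)).const_mul (2 * π * a ^ 3))
  have hsqrt := (((hsq.const_mul 2).add_const (a ^ 2)).const_mul (8 * a)).fun_mul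
    (hasDerivAt_sqrt_sq_sub h)
  have harccos := (hsq.const_mul (24 * a ^ 2)).fun_mul (hasDerivAt_arccos_const_div hid hl h)
  have hprod := (hid.div_const (a ^ 6)).fun_mul ((hpoly.fun_sub hsqrt).fun_add harccos)
  refine hprod.congr_deriv ?_
  have hpos := sqrt_pos.2 (sub_pos.2 h)
  have hs := sq_sqrt (sub_pos.2 h).le
  have hsingular : 24 * a ^ 2 * l ^ 2 * (a / (l * √(l ^ 2 - a ^ 2)))
      - 8 * a * (2 * l ^ 2 + a ^ 2) * (l / √(l ^ 2 - a ^ 2)) =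
      -16 * a * l * √(l ^ 2 - a ^ 2) := by
    field_simp
    linear_combination 16 * a * hs
  rw [P₂']
  push_cast
  linear_combination (l / a ^ 6) * hsingular

lemma hasDerivAt_P₂' (hl : 0 < l) (h : a ^ 2 < l ^ 2) : HasDerivAt (P₂' a) (P₂'' a l) l := by
  have hid := hasDerivAt_id' l
  have hsq := hasDerivAt_pow 2 l
  have hpoly := ((((hasDerivAt_pow 4 l).const_mul 10).fun_add
    (hsq.const_mul (18 * a ^ 2))).sub_const (a ^ 4)).fun_sub
    (((hid.const_mul 8).sub_const (3 * a)).const_mul (2 * π * a ^ 3))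
  have hsqrt := (((hsq.const_mul 8).add_const (a ^ 2)).const_mul (8 * a)).fun_mul
    (hasDerivAt_sqrt_sq_sub h)
  have harccos := (hsq.const_mul (72 * a ^ 2)).fun_mul (hasDerivAt_arccos_const_div hid hl h)
  refine (((hpoly.fun_sub hsqrt).fun_add harccos).div_const (a ^ 6)).congr_deriv ?_
  have hpos := sqrt_pos.2 (sub_pos.2 h)
  have hs := sq_sqrt (sub_pos.2 h).le
  have hsingular : 72 * a ^ 2 * l ^ 2 * (a / (l * √(l ^ 2 - a ^ 2)))
      - 8 * a * (8 * l ^ 2 + a ^ 2) * (l / √(l ^ 2 - a ^ 2)) =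
      -64 * a * l * √(l ^ 2 - a ^ 2) := by
    field_simp
    linear_combination 64 * a * hs
  rw [P₂'']
  push_cast
  linear_combination hsingular / a ^ 6

lemma hasDerivAt_P₃ (hl : 0 < l) (h : 2 * a ^ 2 < l ^ 2) : HasDerivAt (P₃ a) (P₃' a l) l := by
  have hid := hasDerivAt_id' l
  have hsq := hasDerivAt_pow 2 l
  have hsqrt := ((hsq.add_const (a ^ 2)).const_mul (8 * a)).fun_mul (hasDerivAt_sqrt_sq_sub h)
  have hquartic := (hsq.add_const (a ^ 2)).fun_mul (hsq.add_const (5 * a ^ 2))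
  have hquadratic := (((hsq.const_mul 3).fun_sub (hid.const_mul (4 * a))).add_const
    (3 * a ^ 2)).const_mul (2 * π * a ^ 2)
  have harccos := (hid.const_mul (24 * a ^ 3)).fun_mul (hasDerivAt_arccos_div_sq_sub_sq hl h)
  have harccos' := ((hsq.add_const (a ^ 2)).const_mul (24 * a ^ 2)).fun_mul
    (hasDerivAt_arccos_div_sqrt_sq_sub_sq h)
  have hprod := (hid.div_const (a ^ 6)).fun_mul
    ((((hsqrt.fun_sub hquartic).fun_add hquadratic).fun_add harccos).fun_sub harccos')
  refine hprod.congr_deriv ?_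
  have hpos := sqrt_pos.2 (sub_pos.2 h)
  have hs := sq_sqrt (sub_pos.2 h).le
  have hden : 0 < l ^ 2 - a ^ 2 := by nlinarith
  have hsingular : 8 * a * (l ^ 2 + a ^ 2) * (l / √(l ^ 2 - 2 * a ^ 2))
      + 24 * a ^ 3 * l * (2 * a ^ 2 / ((l ^ 2 - a ^ 2) * √(l ^ 2 - 2 * a ^ 2)))
      - 24 * a ^ 2 * (l ^ 2 + a ^ 2) * (a * l / ((l ^ 2 - a ^ 2) * √(l ^ 2 - 2 * a ^ 2))) =
      8 * a * l * √(l ^ 2 - 2 * a ^ 2) := by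
    generalize √(l ^ 2 - 2 * a ^ 2) = s at hpos hs ⊢
    field_simp
    rw [hs]
    ring
  rw [P₃']
  push_cast
  linear_combination (l / a ^ 6) * hsingular

lemma hasDerivAt_P₃' (hl : 0 < l) (h : 2 * a ^ 2 < l ^ 2) : HasDerivAt (P₃' a) (P₃'' a l) l := by
  have hid := hasDerivAt_id' l
  have hsq := hasDerivAt_pow 2 l
  have hsqrt := (((hsq.const_mul 4).add_const (a ^ 2)).const_mul (8 * a)).fun_mul
    (hasDerivAt_sqrt_sq_sub h)
  have hquartic := (((hasDerivAt_pow 4 l).const_mul 5).fun_add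
    (hsq.const_mul (18 * a ^ 2))).add_const (5 * a ^ 4)
  have hquadratic := (((hsq.const_mul 9).fun_sub (hid.const_mul (8 * a))).add_const
    (3 * a ^ 2)).const_mul (2 * π * a ^ 2)
  have harccos := (hid.const_mul (48 * a ^ 3)).fun_mul (hasDerivAt_arccos_div_sq_sub_sq hl h)
  have harccos' := (((hsq.const_mul 3).add_const (a ^ 2)).const_mul (24 * a ^ 2)).fun_mul
    (hasDerivAt_arccos_div_sqrt_sq_sub_sq h)
  refine (((((hsqrt.fun_sub hquartic).fun_add hquadratic).fun_add harccos).fun_sub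
    harccos').div_const (a ^ 6)).congr_deriv ?_
  have hpos := sqrt_pos.2 (sub_pos.2 h)
  have hs := sq_sqrt (sub_pos.2 h).le
  have hden : 0 < l ^ 2 - a ^ 2 := by nlinarith
  have hsingular : 8 * a * (4 * l ^ 2 + a ^ 2) * (l / √(l ^ 2 - 2 * a ^ 2))
      + 48 * a ^ 3 * l * (2 * a ^ 2 / ((l ^ 2 - a ^ 2) * √(l ^ 2 - 2 * a ^ 2)))
      - 24 * a ^ 2 * (3 * l ^ 2 + a ^ 2) * (a * l / ((l ^ 2 - a ^ 2) * √(l ^ 2 - 2 * a ^ 2))) =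
      32 * a * l * √(l ^ 2 - 2 * a ^ 2) := by
    generalize √(l ^ 2 - 2 * a ^ 2) = s at hpos hs ⊢
    field_simp
    rw [hs]
    ring
  rw [P₃'']
  push_cast
  linear_combination hsingular / a ^ 6

lemma continuousAt_P₂'' (hl : l ≠ 0) : ContinuousAt (P₂'' a) l := by
  unfold P₂''
  fun_prop (disch := assumption)

lemma continuousAt_P₃ (h : a ^ 2 < l ^ 2) : ContinuousAt (P₃ a) l := by
  have hden : l ^ 2 - a ^ 2 ≠ 0 := (sub_pos.2 h).ne'
  have hsqrt : √(l ^ 2 - a ^ 2) ≠ 0 := (sqrt_pos.2 (sub_pos.2 h)).ne'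
  unfold P₃
  fun_prop (disch := assumption)

lemma continuousAt_P₃' (h : a ^ 2 < l ^ 2) : ContinuousAt (P₃' a) l := by
  have hden : l ^ 2 - a ^ 2 ≠ 0 := (sub_pos.2 h).ne'
  have hsqrt : √(l ^ 2 - a ^ 2) ≠ 0 := (sqrt_pos.2 (sub_pos.2 h)).ne'
  unfold P₃'
  fun_prop (disch := assumption)

lemma continuousAt_P₃'' (h : a ^ 2 < l ^ 2) : ContinuousAt (P₃'' a) l := by
  have hden : l ^ 2 - a ^ 2 ≠ 0 := (sub_pos.2 h).ne'
  have hsqrt : √(l ^ 2 - a ^ 2) ≠ 0 := (sqrt_pos.2 (sub_pos.2 h)).ne'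
  unfold P₃''
  fun_prop (disch := assumption)

end Densities

section Junction

variable {a : ℝ}

lemma sqrt_two_mul_sq : (√2 * a) ^ 2 = 2 * a ^ 2 := by
  rw [mul_pow, sq_sqrt zero_le_two]

lemma sqrt_sqrt_two_mul_sq_sub_sq (ha : 0 ≤ a) : √((√2 * a) ^ 2 - a ^ 2) = a := by
  rw [sqrt_two_mul_sq, two_mul, add_sub_cancel_right, sqrt_sq ha]

lemma sqrt_sqrt_two_mul_sq_sub_two_mul_sq : √((√2 * a) ^ 2 - 2 * a ^ 2) = 0 := by
  rw [sqrt_two_mul_sq, sub_self, sqrt_zero]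

lemma arccos_sq_div_sqrt_two_mul_sq_sub_sq (ha : a ≠ 0) :
    arccos (a ^ 2 / ((√2 * a) ^ 2 - a ^ 2)) = 0 := by
  rw [sqrt_two_mul_sq, two_mul, add_sub_cancel_right, div_self (pow_ne_zero 2 ha), arccos_one]

lemma arccos_div_sqrt_two_mul (ha : a ≠ 0) : arccos (a / (√2 * a)) = π / 4 := by
  rw [div_mul_cancel_right₀ ha, ← sqrt_div_self, ← cos_pi_div_four,
    arccos_cos (by positivity) (by linarith [pi_pos])]

lemma P₂_sqrt_two_mul_eq_P₃ (ha : 0 < a) : P₂ a (√2 * a) = P₃ a (√2 * a) := by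
  have hsq : (√2 * a) ^ 2 = 2 * a ^ 2 := sqrt_two_mul_sq
  rw [P₂, P₃, sqrt_sqrt_two_mul_sq_sub_sq ha.le, sqrt_sqrt_two_mul_sq_sub_two_mul_sq,
    arccos_div_sqrt_two_mul ha.ne', arccos_sq_div_sqrt_two_mul_sq_sub_sq ha.ne', div_self ha.ne',
    arccos_one]
  congr 1
  linear_combination (3 * (√2 * a) ^ 2 + 2 * a ^ 2) * hsq

lemma P₂'_sqrt_two_mul_eq_P₃' (ha : 0 < a) : P₂' a (√2 * a) = P₃' a (√2 * a) := by
  have hsq : (√2 * a) ^ 2 = 2 * a ^ 2 := sqrt_two_mul_sq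
  rw [P₂', P₃', sqrt_sqrt_two_mul_sq_sub_sq ha.le, sqrt_sqrt_two_mul_sq_sub_two_mul_sq,
    arccos_div_sqrt_two_mul ha.ne', arccos_sq_div_sqrt_two_mul_sq_sub_sq ha.ne', div_self ha.ne',
    arccos_one]
  congr 1
  linear_combination (15 * (√2 * a) ^ 2 + 2 * a ^ 2) * hsq

lemma P₂''_sqrt_two_mul_eq_P₃'' (ha : 0 < a) : P₂'' a (√2 * a) = P₃'' a (√2 * a) := by
  have hsq : (√2 * a) ^ 2 = 2 * a ^ 2 := sqrt_two_mul_sq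
  rw [P₂'', P₃'', sqrt_sqrt_two_mul_sq_sub_sq ha.le, sqrt_sqrt_two_mul_sq_sub_two_mul_sq,
    arccos_div_sqrt_two_mul ha.ne', arccos_sq_div_sqrt_two_mul_sq_sub_sq ha.ne', div_self ha.ne',
    arccos_one]
  congr 1
  linear_combination 60 * (√2 * a) * hsq

lemma sq_lt_sqrt_two_mul_sq (ha : a ≠ 0) : a ^ 2 < (√2 * a) ^ 2 := by
  rw [sqrt_two_mul_sq]
  linarith [sq_pos_of_ne_zero ha]

lemma eventually_nhds_sqrt_two_mul_sq_lt_sq (ha : 0 < a) :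
    ∀ᶠ l in 𝓝 (√2 * a), 0 < l ∧ a ^ 2 < l ^ 2 :=
  (lt_mem_nhds (by positivity)).and
    ((continuous_pow 2).continuousAt.eventually (lt_mem_nhds (sq_lt_sqrt_two_mul_sq ha.ne')))

lemma eventually_nhdsGT_sqrt_two_mul_two_mul_sq_lt_sq (ha : 0 ≤ a) :
    ∀ᶠ l in 𝓝[>] (√2 * a), 0 < l ∧ 2 * a ^ 2 < l ^ 2 := by
  have hc : 0 ≤ √2 * a := by positivity
  filter_upwards [self_mem_nhdsWithin] with l (hl : √2 * a < l)
  exact ⟨hc.trans_lt hl, sqrt_two_mul_sq ▸ pow_lt_pow_left₀ hl hc two_ne_zero⟩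

end Junction

theorem second_deriv_continuous_at_sqrt_two_a (a : ℝ) (ha : 0 < a) :
    DifferentiableAt ℝ (deriv (P a)) (Real.sqrt 2 * a) ∧
    ∃ L : ℝ,
      Tendsto (fun l => deriv (deriv (P₂ a)) l) (𝓝[<] (Real.sqrt 2 * a)) (𝓝 L) ∧
      Tendsto (fun l => deriv (deriv (P₃ a)) l) (𝓝[>] (Real.sqrt 2 * a)) (𝓝 L) := by
  have hleft : ∀ᶠ l in 𝓝[<] (√2 * a), 0 < l ∧ a ^ 2 < l ^ 2 :=
    (eventually_nhds_sqrt_two_mul_sq_lt_sq ha).filter_mono nhdsWithin_le_nhds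
  have hright := eventually_nhdsGT_sqrt_two_mul_two_mul_sq_lt_sq ha.le
  have hP₂ := hleft.mono fun l hl => hasDerivAt_P₂ hl.1 hl.2
  have hP₂' := hleft.mono fun l hl => hasDerivAt_P₂' hl.1 hl.2
  have hP₃ := hright.mono fun l hl => hasDerivAt_P₃ hl.1 hl.2
  have hP₃' := hright.mono fun l hl => hasDerivAt_P₃' hl.1 hl.2
  obtain ⟨hc, hlt⟩ := (eventually_nhds_sqrt_two_mul_sq_lt_sq ha).self_of_nhds
  have hcont₂ := continuousAt_P₂'' (a := a) hc.ne'
  have hcont₃ := continuousAt_P₃'' hlt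
  refine ⟨?_, P₂'' a (√2 * a), ?_, ?_⟩
  · exact differentiableAt_deriv_of_eventually_ne (eventually_ne_hasDerivAt_ite_le hP₂ hP₃)
      (eventually_ne_hasDerivAt_ite_le hP₂' hP₃')
      (continuousAt_ite_le (hasDerivAt_P₂ hc hlt).continuousAt (continuousAt_P₃ hlt)
        (P₂_sqrt_two_mul_eq_P₃ ha))
      (continuousAt_ite_le (hasDerivAt_P₂' hc hlt).continuousAt (continuousAt_P₃' hlt)
        (P₂'_sqrt_two_mul_eq_P₃' ha))
      (continuousAt_ite_le hcont₂ hcont₃ (P₂''_sqrt_two_mul_eq_P₃'' ha))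
  · exact tendsto_deriv_deriv_nhdsWithin isOpen_Iio hP₂ hP₂' (hcont₂.mono_left nhdsWithin_le_nhds)
  · rw [P₂''_sqrt_two_mul_eq_P₃'' ha]
    exact tendsto_deriv_deriv_nhdsWithin isOpen_Ioi hP₃ hP₃' (hcont₃.mono_left nhdsWithin_le_nhds)
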